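/- Suppose there exist finitely supported probability distributions U₁(·|x) on 𝒮, one for each x∈𝒳, such that Σ_s U₁(s|x')ρ_{x,y,s} = Σ_s U₁(s|x)ρ_{x',y,s} for all x,x'∈𝒳 and all y∈𝒴. Then every (n,M₁,M₂) deterministic code with M₁ ≥ 2 satisfies sup_{s^n∈𝒮^n} ē(C,s^n) ≥ 1/4. -/

import Mathlib

open scoped ComplexOrder

noncomputable section

/-- A density matrix: positive semidefinite with unit trace. -/
def IsDensity {m : Type*} [Fintype m] (ρ : Matrix m m ℂ) : Prop :=
  ρ.PosSemidef ∧ ρ.trace = 1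

/-- Tensor product of a finite family of matrices, realized on functions. -/
def tensorFam {k d : Type*} [Fintype k] (ρ : k → Matrix d d ℂ) :
    Matrix (k → d) (k → d) ℂ :=
  Matrix.of fun i j => ∏ a, ρ a (i a) (j a)

theorem aux_exists_factor {m : Type*} [Fintype m] [DecidableEq m] {A : Matrix m m ℂ}
    (hA : A.PosSemidef) : ∃ B : Matrix m m ℂ, A = B.conjTranspose * B := by
  open scoped MatrixOrder in
  obtain ⟨B, hB⟩ := CStarAlgebra.nonneg_iff_eq_star_mul_self.mp hA.nonneg
  exact ⟨B, hB⟩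

theorem aux_trace_mul_nonneg {m : Type*} [Fintype m] [DecidableEq m] {A G : Matrix m m ℂ}
    (hA : A.PosSemidef) (hG : G.PosSemidef) : 0 ≤ (Matrix.trace (A * G)).re := by
  obtain ⟨B, rfl⟩ := aux_exists_factor hG
  have h := (hA.mul_mul_conjTranspose_same B).trace_nonneg
  have e : Matrix.trace (A * (B.conjTranspose * B)) = Matrix.trace (B * A * B.conjTranspose) := by
    rw [← Matrix.mul_assoc, Matrix.trace_mul_comm, Matrix.mul_assoc]
  rw [e]
  exact (Complex.le_def.mp h).1

theorem aux_tensorFam_mul {k d : Type*} [Fintype k] [DecidableEq k] [Fintype d]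
    (A B : k → Matrix d d ℂ) :
    tensorFam A * tensorFam B = tensorFam fun a => A a * B a := by
  ext i j
  simp only [tensorFam, Matrix.mul_apply, Matrix.of_apply]
  rw [Finset.prod_univ_sum, Fintype.piFinset_univ]
  simp only [Finset.prod_mul_distrib]

theorem aux_tensorFam_trace {k d : Type*} [Fintype k] [DecidableEq k] [Fintype d]
    (A : k → Matrix d d ℂ) :
    (tensorFam A).trace = ∏ a, (A a).trace := by
  simp only [tensorFam, Matrix.trace, Matrix.diag, Matrix.of_apply]
  rw [Finset.prod_univ_sum, Fintype.piFinset_univ]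

theorem aux_tensorFam_posSemidef {k d : Type*} [Fintype k] [DecidableEq k] [Fintype d]
    [DecidableEq d] (A : k → Matrix d d ℂ) (hA : ∀ a, (A a).PosSemidef) :
    (tensorFam A).PosSemidef := by
  choose B hB using fun a => aux_exists_factor (hA a)
  have e : tensorFam A = (tensorFam B).conjTranspose * tensorFam B := by
    have : (tensorFam B).conjTranspose = tensorFam fun a => (B a).conjTranspose := by
      ext i j
      simp [tensorFam, Matrix.conjTranspose_apply]
    rw [this, aux_tensorFam_mul]
    congr 1
    funext a
    exact hB a
  rw [e]
  exact Matrix.posSemidef_conjTranspose_mul_self _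

theorem aux_tensorFam_density {k d : Type*} [Fintype k] [DecidableEq k] [Fintype d]
    [DecidableEq d] (A : k → Matrix d d ℂ) (hA : ∀ a, IsDensity (A a)) :
    IsDensity (tensorFam A) := by
  refine ⟨aux_tensorFam_posSemidef A fun a => (hA a).1, ?_⟩
  rw [aux_tensorFam_trace]
  exact Finset.prod_eq_one fun a _ => (hA a).2

theorem aux_tensorFam_sum {k d S : Type*} [Fintype k] [DecidableEq k]
    (F : Finset S) (w : k → S → ℝ) (A : k → S → Matrix d d ℂ) :
    tensorFam (fun a => ∑ s ∈ F, w a s • A a s) =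
      ∑ s ∈ Fintype.piFinset (fun _ : k => F),
        (∏ a, w a (s a)) • tensorFam (fun a => A a (s a)) := by
  ext i j
  simp only [tensorFam, Matrix.of_apply, Matrix.sum_apply, Matrix.smul_apply,
    Complex.real_smul]
  rw [Finset.prod_univ_sum]
  refine Finset.sum_congr rfl fun s _ => ?_
  rw [Finset.prod_mul_distrib, Complex.ofReal_prod]

theorem aux_mix_density {d S : Type*} [Fintype d] (F : Finset S) (w : S → ℝ)
    (hw : ∀ s, 0 ≤ w s) (hw1 : ∑ s ∈ F, w s = 1) (A : S → Matrix d d ℂ)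
    (hA : ∀ s, IsDensity (A s)) : IsDensity (∑ s ∈ F, w s • A s) := by
  refine ⟨Matrix.posSemidef_sum _ fun s _ => (hA s).1.smul (hw s), ?_⟩
  rw [Matrix.trace_sum]
  simp only [Matrix.trace_smul, (hA _).2, Complex.real_smul, mul_one]
  rw [← Complex.ofReal_sum, hw1, Complex.ofReal_one]

theorem aux_pair {ι κ m : Type*} [Fintype ι] [Fintype κ] [DecidableEq ι]
    [Fintype m] [DecidableEq m]
    (D : ι → κ → Matrix m m ℂ) (hD : ∀ a b, (D a b).PosSemidef)
    (hDsum : ∑ a, ∑ b, D a b = 1) (G : Matrix m m ℂ) (hG : IsDensity G) (i j : ι) (b : κ) :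
    (Matrix.trace (D i b * G)).re + (Matrix.trace (D j b * G)).re ≤
      1 + if i = j then 1 else 0 := by
  classical
  have h0 : ∀ p : ι × κ, 0 ≤ (Matrix.trace (D p.1 p.2 * G)).re :=
    fun p => aux_trace_mul_nonneg (hD _ _) hG.1
  have h1 : ∑ p : ι × κ, (Matrix.trace (D p.1 p.2 * G)).re = 1 := by
    rw [← Complex.re_sum, ← Matrix.trace_sum, ← Finset.sum_mul, Fintype.sum_prod_type, hDsum,
      one_mul, hG.2, Complex.one_re]
  have hs : ∀ p : ι × κ, (Matrix.trace (D p.1 p.2 * G)).re ≤ 1 := fun p => by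
    rw [← h1]
    exact Finset.single_le_sum (fun q _ => h0 q) (Finset.mem_univ p)
  split_ifs with h
  · exact add_le_add (hs (i, b)) (hs (j, b))
  · have hne : ((i, b) : ι × κ) ≠ (j, b) := fun e => h (congrArg Prod.fst e)
    have hsub := Finset.sum_le_sum_of_subset_of_nonneg
      (f := fun p : ι × κ => (Matrix.trace (D p.1 p.2 * G)).re)
      (Finset.subset_univ {(i, b), (j, b)}) (fun q _ _ => h0 q)
    rw [Finset.sum_pair hne, h1] at hsub
    rw [add_zero]
    exact hsub

/-- If the family is exactly `𝒳`-symmetrizable, then any deterministic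
code with `M₁ ≥ 2` has worst-case average error at least `1/4`. -/
theorem statement12 {𝒳 𝒴 𝒮 : Type*} [Fintype 𝒳] [DecidableEq 𝒳] [Fintype 𝒴] [DecidableEq 𝒴]
    [Nonempty 𝒮] {d : ℕ}
    (ρ : 𝒳 → 𝒴 → 𝒮 → Matrix (Fin d) (Fin d) ℂ)
    (hρ : ∀ x y s, IsDensity (ρ x y s))
    (U : 𝒳 → 𝒮 →₀ ℝ)
    (hU0 : ∀ x s, 0 ≤ U x s)
    (hU1 : ∀ x, (U x).sum (fun _ a => a) = 1)
    (hsym : ∀ x x' y,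
      (U x').sum (fun s w => w • ρ x y s) = (U x).sum (fun s w => w • ρ x' y s))
    (n M₁ M₂ : ℕ) (hn : 1 ≤ n) (hM₁ : 2 ≤ M₁)
    (f₁ : Fin M₁ → (Fin n → 𝒳)) (f₂ : Fin M₂ → (Fin n → 𝒴))
    (D : Fin M₁ → Fin M₂ → Matrix (Fin n → Fin d) (Fin n → Fin d) ℂ)
    (hD : ∀ m₁ m₂, (D m₁ m₂).PosSemidef)
    (hDsum : ∑ m₁, ∑ m₂, D m₁ m₂ = 1) :
    (1 : ℝ) / 4 ≤
      ⨆ sv : Fin n → 𝒮,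
        1 - (1 / ((M₁ : ℝ) * (M₂ : ℝ))) * ∑ m₁, ∑ m₂,
          (Matrix.trace (D m₁ m₂ *
            tensorFam fun k => ρ (f₁ m₁ k) (f₂ m₂ k) (sv k))).re := by
  classical
  set g : Fin M₁ → Fin M₂ → (Fin n → 𝒮) → ℝ := fun m₁ m₂ sv =>
    (Matrix.trace (D m₁ m₂ * tensorFam fun k => ρ (f₁ m₁ k) (f₂ m₂ k) (sv k))).re with hg
  have hg0 : ∀ m₁ m₂ sv, 0 ≤ g m₁ m₂ sv := fun m₁ m₂ sv =>
    aux_trace_mul_nonneg (hD _ _) (aux_tensorFam_density _ fun k => hρ _ _ _).1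
  change (1 : ℝ) / 4 ≤ ⨆ sv : Fin n → 𝒮,
    1 - (1 / ((M₁ : ℝ) * (M₂ : ℝ))) * ∑ m₁, ∑ m₂, g m₁ m₂ sv
  have hbdd : BddAbove (Set.range fun sv : Fin n → 𝒮 =>
      1 - (1 / ((M₁ : ℝ) * (M₂ : ℝ))) * ∑ m₁, ∑ m₂, g m₁ m₂ sv) := by
    refine ⟨1, ?_⟩
    rintro _ ⟨sv, rfl⟩
    have : 0 ≤ (1 / ((M₁ : ℝ) * (M₂ : ℝ))) * ∑ m₁, ∑ m₂, g m₁ m₂ sv :=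
      mul_nonneg (by positivity)
        (Finset.sum_nonneg fun i _ => Finset.sum_nonneg fun j _ => hg0 i j sv)
    simp only
    linarith
  have hle := fun sv => le_ciSup hbdd sv
  generalize (⨆ sv : Fin n → 𝒮,
    1 - (1 / ((M₁ : ℝ) * (M₂ : ℝ))) * ∑ m₁, ∑ m₂, g m₁ m₂ sv) = c at hle ⊢
  rcases Nat.eq_zero_or_pos M₂ with h0 | hM₂
  · have := hle (fun _ => Classical.arbitrary 𝒮)
    have hz : (M₂ : ℝ) = 0 := by exact_mod_cast h0
    rw [hz, mul_zero, div_zero, zero_mul] at this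
    linarith
  have hM1 : (2 : ℝ) ≤ M₁ := by exact_mod_cast hM₁
  have hM2 : (0 : ℝ) < M₂ := by exact_mod_cast hM₂
  have hS : ∀ sv, (1 - c) * (M₁ * M₂) ≤ ∑ m₁, ∑ m₂, g m₁ m₂ sv := fun sv => by
    have h := hle sv
    have hp : (0 : ℝ) < M₁ * M₂ := by positivity
    rw [one_div, inv_mul_eq_div] at h
    exact (le_div_iff₀ hp).mp (by linarith)
  let F : Finset 𝒮 := Finset.univ.biUnion fun x => (U x).support
  have hF : ∀ x, (U x).support ⊆ F := fun x =>
    Finset.subset_biUnion_of_mem (fun x => (U x).support) (Finset.mem_univ x)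
  have hU1' : ∀ x, ∑ s ∈ F, U x s = 1 := fun x => by
    rw [← hU1 x, Finsupp.sum_of_support_subset _ (hF x) _ (by simp)]
  have hsym' : ∀ x x' y, ∑ s ∈ F, U x' s • ρ x y s = ∑ s ∈ F, U x s • ρ x' y s :=
    fun x x' y => by
      have h := hsym x x' y
      rwa [Finsupp.sum_of_support_subset _ (hF x') _ (by simp),
        Finsupp.sum_of_support_subset _ (hF x) _ (by simp)] at h
  let G : Fin M₁ → Fin M₁ → Fin M₂ → Matrix (Fin n → Fin d) (Fin n → Fin d) ℂ :=
    fun i j b => tensorFam fun k => ∑ s ∈ F, U (f₁ j k) s • ρ (f₁ i k) (f₂ b k) s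
  have hGd : ∀ i j b, IsDensity (G i j b) := fun i j b =>
    aux_tensorFam_density _ fun k => aux_mix_density F _ (hU0 _) (hU1' _) _ fun s => hρ _ _ _
  have hGs : ∀ i j b, G i j b = G j i b := fun i j b => by
    simp only [G]
    congr 1
    funext k
    exact hsym' _ _ _
  let P := Fintype.piFinset (fun _ : Fin n => F)
  let W : Fin M₁ → (Fin n → 𝒮) → ℝ := fun j sv => ∏ k, U (f₁ j k) (sv k)
  have hW0 : ∀ j sv, 0 ≤ W j sv := fun j sv => Finset.prod_nonneg fun k _ => hU0 _ _
  have hW1 : ∀ j, ∑ sv ∈ P, W j sv = 1 := fun j => by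
    simp only [W, P]
    rw [← Finset.prod_univ_sum (fun _ : Fin n => F) (fun k s => U (f₁ j k) s)]
    exact Finset.prod_eq_one fun k _ => hU1' _
  let h : Fin M₁ → Fin M₁ → Fin M₂ → ℝ := fun i j b => (Matrix.trace (D i b * G i j b)).re
  have hh : ∀ i j b, h i j b = ∑ sv ∈ P, W j sv * g i b sv := fun i j b => by
    simp only [h, G, W, P, hg]
    rw [aux_tensorFam_sum F (fun k s => U (f₁ j k) s) (fun k s => ρ (f₁ i k) (f₂ b k) s),
      Finset.mul_sum, Matrix.trace_sum, Complex.re_sum]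
    refine Finset.sum_congr rfl fun sv _ => ?_
    rw [Matrix.mul_smul, Matrix.trace_smul, Complex.real_smul, Complex.re_ofReal_mul]
  have hlow : ∀ j, (1 - c) * (M₁ * M₂) ≤ ∑ i, ∑ b, h i j b := fun j => by
    have e : ∑ i, ∑ b, h i j b = ∑ sv ∈ P, W j sv * ∑ i, ∑ b, g i b sv := by
      simp only [hh, Finset.mul_sum]
      symm
      rw [Finset.sum_comm]
      refine Finset.sum_congr rfl fun i _ => ?_
      rw [Finset.sum_comm]
    rw [e]
    calc (1 - c) * (M₁ * M₂) = ∑ sv ∈ P, W j sv * ((1 - c) * (M₁ * M₂)) := by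
          rw [← Finset.sum_mul, hW1, one_mul]
      _ ≤ _ := Finset.sum_le_sum fun sv _ => mul_le_mul_of_nonneg_left (hS sv) (hW0 j sv)
  have hT1 : M₁ * ((1 - c) * (M₁ * M₂)) ≤ ∑ j, ∑ i, ∑ b, h i j b := by
    calc M₁ * ((1 - c) * (M₁ * M₂)) = ∑ j : Fin M₁, (1 - c) * (M₁ * M₂) := by simp
      _ ≤ _ := Finset.sum_le_sum fun j _ => hlow j
  have hpair : ∀ i j b, h i j b + h j i b ≤ 1 + if i = j then 1 else 0 := fun i j b => by
    have := aux_pair D hD hDsum (G i j b) (hGd i j b) i j b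
    simp only [h]
    rw [hGs j i b]
    exact this
  have hT2 : (∑ j, ∑ i, ∑ b, h i j b) + (∑ j, ∑ i, ∑ b, h i j b) ≤ M₁ * M₁ * M₂ + M₁ * M₂ := by
    have e : (∑ j, ∑ i, ∑ b, h i j b) = ∑ j, ∑ i, ∑ b, h j i b := Finset.sum_comm
    calc (∑ j, ∑ i, ∑ b, h i j b) + (∑ j, ∑ i, ∑ b, h i j b)
        = (∑ j, ∑ i, ∑ b, h i j b) + ∑ j, ∑ i, ∑ b, h j i b := by rw [← e]
      _ = ∑ j, ∑ i, ∑ b, (h i j b + h j i b) := by simp only [Finset.sum_add_distrib]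
      _ ≤ ∑ j : Fin M₁, ∑ i : Fin M₁, ∑ _b : Fin M₂, (1 + if i = j then 1 else 0 : ℝ) :=
          Finset.sum_le_sum fun j _ => Finset.sum_le_sum fun i _ =>
            Finset.sum_le_sum fun b _ => hpair i j b
      _ = M₁ * M₁ * M₂ + M₁ * M₂ := by
          simp [Finset.sum_add_distrib, mul_add, ← Finset.mul_sum]
          ring
  have hfin : 2 * (1 - c) * M₁ ≤ M₁ + 1 := by
    have hp : (0 : ℝ) < M₁ * M₂ := by positivity
    refine le_of_mul_le_mul_right ?_ hp
    nlinarith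
  by_contra hc
  push Not at hc
  nlinarith
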